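/- arXiv:1109.0716 — 2 statements merged into one kernel-verified Lean document; each statement's English description precedes it below -/
import Mathlib

section
/- Every nonconstant entire function f : ℂ → ℂ attains every complex value with at most one exception; that is, the complement of the range of f contains at most one point. -/
open Complex Metric Set in
theorem pic_log (f : ℂ → ℂ) (hf : Differentiable ℂ f) (h0 : ∀ z, f z ≠ 0) :
    ∃ g : ℂ → ℂ, Differentiable ℂ g ∧ ∀ z, exp (g z) = f z := by
  have hd : Differentiable ℂ (deriv f) := hf.deriv
  have hq : Differentiable ℂ (fun z => deriv f z / f z) := hd.div hf h0
  obtain ⟨g, hg0, hg⟩ := hq.isExactOn_univ.with_val_at 0 (log (f 0))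
  have hgd : Differentiable ℂ g := fun z => (hg z (mem_univ z)).differentiableAt
  refine ⟨g, hgd, fun z => ?_⟩
  have key : ∀ z, HasDerivAt (fun z => f z * exp (-(g z))) 0 z := by
    intro z
    have h1 := (hf z).hasDerivAt.mul (hg z (mem_univ z)).neg.cexp
    have h2 : deriv f z * exp ((-g) z) + f z * (exp ((-g) z) * -(deriv f z / f z)) = 0 := by
      have := h0 z
      field_simp
      ring
    rw [h2] at h1
    exact h1
  have hc := is_const_of_deriv_eq_zero (f := fun z => f z * exp (-(g z)))
    (fun z => (key z).differentiableAt) (fun z => (key z).deriv) z 0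
  simp only [hg0, exp_neg, exp_log (h0 0)] at hc
  rw [mul_inv_cancel₀ (h0 0)] at hc
  have := exp_ne_zero (g z)
  field_simp at hc
  exact hc.symm

open Complex in
theorem pic_cos (f : ℂ → ℂ) (hf : Differentiable ℂ f) (h1 : ∀ z, f z ≠ 1)
    (h2 : ∀ z, f z ≠ -1) :
    ∃ g : ℂ → ℂ, Differentiable ℂ g ∧ ∀ z, cos (g z) = f z := by
  obtain ⟨L, hL, hLe⟩ := pic_log (fun z => (1 - f z) * (1 + f z)) (by fun_prop) (by
    intro z
    refine mul_ne_zero (sub_ne_zero.2 (h1 z).symm) ?_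
    intro h
    exact h2 z (by linear_combination h))
  have hh : ∀ z, exp (L z / 2) ^ 2 = 1 - f z ^ 2 := by
    intro z
    rw [← exp_nat_mul]
    have : ((2 : ℕ) : ℂ) * (L z / 2) = L z := by push_cast; ring
    rw [this, hLe]; ring
  have hprod : ∀ z, (f z + I * exp (L z / 2)) * (f z - I * exp (L z / 2)) = 1 := by
    intro z
    linear_combination hh z - exp (L z / 2) ^ 2 * I_sq
  obtain ⟨M, hM, hMe⟩ := pic_log (fun z => f z + I * exp (L z / 2)) (by fun_prop)
    (fun z => left_ne_zero_of_mul_eq_one (hprod z))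
  refine ⟨fun z => -I * M z, by fun_prop, fun z => ?_⟩
  have e1 : -I * M z * I = M z := by linear_combination -M z * I_sq
  have e2 : -(-I * M z) * I = -M z := by linear_combination M z * I_sq
  have e3 : exp (-M z) = f z - I * exp (L z / 2) := by
    rw [exp_neg, hMe]
    exact inv_eq_of_mul_eq_one_right (hprod z)
  rw [cos, e1, e2, e3, hMe]
  ring

open Metric Set Filter Topology in
theorem pic_bloch (f : ℂ → ℂ) (hf : Differentiable ℂ f) (z₀ : ℂ) (h0 : deriv f z₀ ≠ 0)
    (B : ℝ) (hB : 0 < B) : ∃ a, ball (f a) B ⊆ range f := by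
  have hd : Differentiable ℂ (deriv f) := hf.deriv
  have hp : 0 < ‖deriv f z₀‖ := norm_pos_iff.2 h0
  set R : ℝ := 48 * B / ‖deriv f z₀‖ with hR
  have hRpos : 0 < R := by positivity
  obtain ⟨a, haR, hmax⟩ := (isCompact_closedBall z₀ R).exists_isMaxOn
    ⟨z₀, mem_closedBall_self hRpos.le⟩
    (f := fun z => (R - dist z z₀) * ‖deriv f z‖)
    (by have := hd.continuous; fun_prop)
  have hm : ∀ z, dist z z₀ ≤ R →
      (R - dist z z₀) * ‖deriv f z‖ ≤ (R - dist a z₀) * ‖deriv f a‖ := fun z hz => hmax hz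
  have hm0 : 48 * B ≤ (R - dist a z₀) * ‖deriv f a‖ := by
    have := hm z₀ (by simpa using hRpos.le)
    rw [dist_self, sub_zero, hR, div_mul_cancel₀ _ hp.ne'] at this
    rwa [← hR] at this
  have haR' : dist a z₀ ≤ R := haR
  set D := ‖deriv f a‖ with hD
  obtain ⟨r, hr⟩ : ∃ r, r = (R - dist a z₀) / 2 := ⟨_, rfl⟩
  have hrD : 24 * B ≤ r * D := by rw [hr]; linarith
  have hr0 : 0 ≤ r := by rw [hr]; linarith
  have hrpos : 0 < r := by
    rcases hr0.eq_or_lt with h | h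
    · rw [← h] at hrD; linarith
    · exact h
  have hDpos : 0 < D := by
    by_contra h
    nlinarith
  have hb : ∀ z ∈ ball a r, ‖deriv f z‖ ≤ 2 * D := by
    intro z hz
    have h1 : dist z z₀ ≤ dist z a + dist a z₀ := dist_triangle _ _ _
    have h2 : dist z a < r := hz
    have h3 : r ≤ R - dist z z₀ := by linarith
    have h4 := hm z (by linarith)
    have h5 : R - dist a z₀ = 2 * r := by linarith
    rw [h5] at h4
    have h6 : r * ‖deriv f z‖ ≤ r * (2 * D) := by
      nlinarith [norm_nonneg (deriv f z)]
    exact le_of_mul_le_mul_left h6 hrpos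
  have hmaps : MapsTo (deriv f) (ball a r) (closedBall (deriv f a) (3 * D)) := by
    intro z hz
    rw [mem_closedBall, dist_eq_norm]
    have := norm_sub_le (deriv f z) (deriv f a)
    have := hb z hz
    linarith
  have hs : ∀ z ∈ closedBall a (r / 6), ‖deriv f z - deriv f a‖ ≤ D / 2 := by
    intro z hz
    have hz' : dist z a ≤ r / 6 := hz
    have h := Complex.dist_le_div_mul_dist_of_mapsTo_ball hd.differentiableOn hmaps
      (show z ∈ ball a r by rw [mem_ball]; linarith)
    rw [dist_eq_norm (deriv f z)] at h
    refine h.trans ?_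
    calc 3 * D / r * dist z a ≤ 3 * D / r * (r / 6) := by gcongr
      _ = D / 2 := by field_simp; norm_num
  have hmv : ∀ z ∈ closedBall a (r / 6), D / 2 * ‖z - a‖ ≤ ‖f z - f a‖ := by
    intro z hz
    have h := Convex.norm_image_sub_le_of_norm_hasDerivWithin_le
      (f := fun z => f z - deriv f a * z) (f' := fun z => deriv f z - deriv f a)
      (s := closedBall a (r / 6)) (C := D / 2) (x := a) (y := z)
      (fun x _ => by
        have := (hf x).hasDerivAt.sub ((hasDerivAt_id x).const_mul (deriv f a))
        rw [mul_one] at this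
        exact this.hasDerivWithinAt) hs (convex_closedBall _ _)
      (mem_closedBall_self (by positivity)) hz
    have h2 : deriv f a * (z - a) =
        (f z - f a) - ((f z - deriv f a * z) - (f a - deriv f a * a)) := by ring
    have h3 : D * ‖z - a‖ ≤ ‖f z - f a‖ + D / 2 * ‖z - a‖ := by
      rw [hD, ← norm_mul, h2]
      exact (norm_sub_le _ _).trans (by gcongr)
    linarith
  refine ⟨a, ?_⟩
  have hfin := DiffContOnCl.ball_subset_image_closedBall (f := f) (z₀ := a) (r := r / 6)
    (ε := D * r / 12) hf.diffContOnCl (by positivity) (by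
      intro z hz
      have := hmv z (sphere_subset_closedBall hz)
      rw [mem_sphere, dist_eq_norm] at hz
      rw [hz] at this
      linarith) (by
      have h1 : ∀ᶠ z in 𝓝[≠] a, f z ≠ f a := by
        have h2 : closedBall a (r / 6) ∈ 𝓝[≠] a :=
          mem_nhdsWithin_of_mem_nhds (closedBall_mem_nhds _ (by positivity))
        filter_upwards [h2, self_mem_nhdsWithin] with z hz hza hfz
        have h3 := hmv z hz
        rw [hfz, sub_self, norm_zero] at h3
        have : 0 < ‖z - a‖ := norm_pos_iff.2 (sub_ne_zero.2 hza)
        nlinarith [mul_pos hDpos this]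
      exact h1.frequently.filter_mono nhdsWithin_le_nhds)
  refine (ball_subset_ball ?_).trans (hfin.trans (image_subset_range _ _))
  linarith

theorem pic_cosh (y : ℝ) : ∃ t : ℝ, |y - t| ≤ 2 ∧ ∃ n : ℤ, Real.cosh t = n := by
  wlog hy : 0 ≤ y generalizing y
  · obtain ⟨t, ht, n, hn⟩ := this (-y) (by linarith)
    refine ⟨-t, ?_, n, by rwa [Real.cosh_neg]⟩
    rw [← abs_neg]
    convert ht using 2
    ring
  have h1 : Real.cosh y + 1 ≤ Real.cosh (y + 2) := by
    have h2 : 2 ≤ Real.cosh 2 := by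
      rw [Real.cosh_eq]
      have h3 := Real.exp_one_gt_d9
      have h4 : Real.exp 2 = Real.exp 1 * Real.exp 1 := by rw [← Real.exp_add]; norm_num
      have h5 := Real.exp_pos (-2)
      nlinarith
    rw [Real.cosh_add]
    have h3 := Real.one_le_cosh y
    have h4 : 0 ≤ Real.sinh y := Real.sinh_nonneg_iff.2 hy
    have h5 : 0 ≤ Real.sinh 2 := Real.sinh_nonneg_iff.2 (by norm_num)
    nlinarith [mul_nonneg h4 h5]
  have h2 := intermediate_value_Icc (show y ≤ y + 2 by linarith) Real.continuous_cosh.continuousOn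
  obtain ⟨t, ht, hn⟩ := h2 ⟨Int.le_ceil (Real.cosh y), by
    linarith [Int.ceil_lt_add_one (Real.cosh y)]⟩
  exact ⟨t, by rw [abs_le]; constructor <;> linarith [ht.1, ht.2], _, hn⟩

theorem pic_per (x : ℂ) (n : ℤ) :
    Complex.cos (x + n * Real.pi) = (-1) ^ n * Complex.cos x :=
  n.cast_negOnePow ℂ ▸ Complex.cos_antiperiodic.add_int_mul_eq n

open Complex in
theorem pic_net (w : ℂ) : ∃ v : ℂ, dist v w < 5 ∧ ∃ n : ℤ, cos v = n := by
  obtain ⟨t, ht, n, hn⟩ := pic_cosh w.im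
  set m : ℤ := round (w.re / Real.pi) with hm
  have hpi := Real.pi_pos
  have hre : |w.re - m * Real.pi| ≤ 2 := by
    have h1 := abs_sub_round (w.re / Real.pi)
    rw [← hm] at h1
    have h2 : w.re - m * Real.pi = (w.re / Real.pi - m) * Real.pi := by field_simp
    rw [h2, abs_mul, abs_of_pos hpi]
    nlinarith [Real.pi_le_four]
  refine ⟨t * I + m * Real.pi, ?_, ?_⟩
  · rw [dist_comm, dist_eq_norm]
    refine (norm_le_abs_re_add_abs_im _).trans_lt ?_
    simp
    linarith
  · rw [pic_per, cos_mul_I, ← ofReal_cosh, hn]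
    refine ⟨((-1 : ℤˣ) ^ m : ℤˣ) * n, ?_⟩
    rcases Int.even_or_odd m with h | h
    · simp [h.neg_one_zpow]
    · simp [h.neg_one_zpow]

theorem pic_pm (f : ℂ → ℂ) (hf : Differentiable ℂ f) (h1 : ∀ z, f z ≠ 1)
    (h2 : ∀ z, f z ≠ -1) : ∃ c, ∀ z, f z = c := by
  obtain ⟨F, hF, hFe⟩ := pic_cos f hf h1 h2
  have hpi : (Real.pi : ℂ) ≠ 0 := by exact_mod_cast Real.pi_ne_zero
  have hint : ∀ z, ∀ n : ℤ, F z / Real.pi ≠ n := by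
    intro z n h
    have h3 : F z = 0 + n * Real.pi := by
      rw [div_eq_iff hpi] at h; rw [h]; ring
    have h4 := hFe z
    rw [h3, pic_per, Complex.cos_zero, mul_one] at h4
    rcases Int.even_or_odd n with h | h
    · rw [h.neg_one_zpow] at h4; exact h1 z h4.symm
    · rw [h.neg_one_zpow] at h4; exact h2 z h4.symm
  obtain ⟨G, hG, hGe⟩ := pic_cos (fun z => F z / Real.pi) (by fun_prop)
    (fun z => by simpa using hint z 1) (fun z => by simpa using hint z (-1))
  have hGd : ∀ z, deriv G z = 0 := by
    intro z
    by_contra hz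
    obtain ⟨a, ha⟩ := pic_bloch G hG z hz 5 (by norm_num)
    obtain ⟨v, hv, n, hn⟩ := pic_net (G a)
    obtain ⟨u, rfl⟩ := ha hv
    exact hint u n ((hGe u).symm.trans hn)
  refine ⟨f 0, fun z => ?_⟩
  have h3 := is_const_of_deriv_eq_zero hG hGd z 0
  have h4 : F z / Real.pi = F 0 / Real.pi := by
    have h5 := hGe z
    have h6 := hGe 0
    rw [← h5, ← h6, h3]
  rw [← hFe z, ← hFe 0, (div_left_inj' hpi).1 h4]

/-- **Picard's little theorem.** Every nonconstant entire function `f : ℂ → ℂ`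
attains every complex value with at most one exception: the complement of the
range of `f` contains at most one point. -/
theorem picard_little (f : ℂ → ℂ) (hf : Differentiable ℂ f)
    (hnc : ¬∃ c : ℂ, ∀ z : ℂ, f z = c) :
    (Set.range f)ᶜ.Subsingleton := by
  intro a ha b hb
  by_contra hab
  apply hnc
  have ha' : ∀ z, f z ≠ a := fun z h => ha ⟨z, h⟩
  have hb' : ∀ z, f z ≠ b := fun z h => hb ⟨z, h⟩
  have hab' : a - b ≠ 0 := sub_ne_zero.2 hab
  obtain ⟨c, hc⟩ := pic_pm (fun z => (2 * f z - a - b) / (a - b)) (by fun_prop)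
    (fun z h => ha' z (by rw [div_eq_iff hab'] at h; linear_combination h / 2))
    (fun z h => hb' z (by rw [div_eq_iff hab'] at h; linear_combination h / 2))
  refine ⟨(c * (a - b) + a + b) / 2, fun z => ?_⟩
  have h := hc z
  rw [div_eq_iff hab'] at h
  linear_combination h / 2
end

section
/- Let U ⊆ ℂ be open and let f : U → ℂ be continuous, with f = P + iQ where P and Q are real-valued. If the partial derivatives ∂P/∂x, ∂P/∂y, ∂Q/∂x, ∂Q/∂y exist at every point of U and satisfy the Cauchy–Riemann equations ∂P/∂x = ∂Q/∂y and ∂P/∂y = −∂Q/∂x at every point of U, then f is holomorphic on U. -/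
open Complex Set

lemma LM_quad (g : ℂ → ℂ) (ρ K : ℝ) (F : Set ℂ) (hF : IsClosed F) (hK : 0 ≤ K)
    (hc : ContinuousOn g (Icc 0 ρ ×ℂ Icc 0 ρ))
    (hd : ∀ z ∈ Ioo 0 ρ ×ℂ Ioo 0 ρ, z ∉ F → DifferentiableAt ℂ g z)
    (hb : ∀ z ∈ Icc 0 ρ ×ℂ Icc 0 ρ, (z ∈ F ∨ z.re = 0 ∨ z.im = 0 ∨ z.re = ρ ∨ z.im = ρ) →
      ‖g z‖ ≤ K * ‖z‖) :
    ∀ z ∈ Icc 0 ρ ×ℂ Icc 0 ρ, ‖g z‖ ≤ K * ‖z‖ := by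
  intro z hz
  by_cases hzV : z ∈ F ∨ z.re = 0 ∨ z.im = 0 ∨ z.re = ρ ∨ z.im = ρ
  · exact hb z hz hzV
  have key : ∀ δ : ℝ, 0 < δ → ‖g z‖ ≤ K * ‖z + δ * (1 + I)‖ := by
    intro δ hδ
    set V : Set ℂ := (Ioo 0 ρ ×ℂ Ioo 0 ρ) \ F with hV
    have hS : IsClosed (Icc 0 ρ ×ℂ Icc 0 ρ) := isClosed_Icc.reProdIm isClosed_Icc
    have hVo : IsOpen V := (isOpen_Ioo.reProdIm isOpen_Ioo).sdiff hF
    have hVS : V ⊆ Icc 0 ρ ×ℂ Icc 0 ρ := by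
      rintro w ⟨⟨h1, h2⟩, -⟩
      exact ⟨Ioo_subset_Icc_self h1, Ioo_subset_Icc_self h2⟩
    have hcl : closure V ⊆ Icc 0 ρ ×ℂ Icc 0 ρ := closure_minimal hVS hS
    have hbd : Bornology.IsBounded V :=
      ((Metric.isBounded_Icc 0 ρ).reProdIm (Metric.isBounded_Icc 0 ρ)).subset hVS
    have hge : ∀ w ∈ Icc 0 ρ ×ℂ Icc 0 ρ, ‖w‖ ≤ ‖w + δ * (1 + I)‖ := by
      rintro w ⟨h1, h2⟩
      simp only [mem_preimage, mem_Icc] at h1 h2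
      rw [Complex.norm_def, Complex.norm_def]
      apply Real.sqrt_le_sqrt
      simp [normSq_apply]
      nlinarith [h1.1, h2.1]
    have hne : ∀ w ∈ Icc 0 ρ ×ℂ Icc 0 ρ, w + δ * (1 + I) ≠ 0 := by
      rintro w ⟨h1, h2⟩ h0
      simp only [mem_preimage, mem_Icc] at h1 h2
      have := congrArg Complex.re h0
      simp at this
      linarith [h1.1]
    have hdc : DiffContOnCl ℂ (fun w => g w / (w + δ * (1 + I))) V := by
      constructor
      · intro w hw
        refine (DifferentiableAt.div (hd w hw.1 hw.2) (by fun_prop) (hne w (hVS hw))).differentiableWithinAt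
      · exact (hc.mono hcl).div (by fun_prop) (fun w hw => hne w (hcl hw))
    have hfr : ∀ w ∈ frontier V, ‖(fun w => g w / (w + δ * (1 + I))) w‖ ≤ K := by
      intro w hw
      rw [hVo.frontier_eq] at hw
      have hwS := hcl hw.1
      have : w ∈ F ∨ w.re = 0 ∨ w.im = 0 ∨ w.re = ρ ∨ w.im = ρ := by
        by_contra hcon
        push Not at hcon
        obtain ⟨a, b, c, d, e⟩ := hcon
        apply hw.2
        obtain ⟨h1, h2⟩ := hwS
        simp only [mem_preimage, mem_Icc] at h1 h2
        refine ⟨⟨⟨lt_of_le_of_ne h1.1 (Ne.symm b), lt_of_le_of_ne h1.2 d⟩,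
          ⟨lt_of_le_of_ne h2.1 (Ne.symm c), lt_of_le_of_ne h2.2 e⟩⟩, a⟩
      have h3 := hb w hwS this
      simp only [norm_div]
      rw [div_le_iff₀ (norm_pos_iff.2 (hne w hwS))]
      exact h3.trans (mul_le_mul_of_nonneg_left (hge w hwS) hK)
    have hzmem : z ∈ V := by
      push Not at hzV
      obtain ⟨a, b, c, d, e⟩ := hzV
      obtain ⟨h1, h2⟩ := hz
      simp only [mem_preimage, mem_Icc] at h1 h2
      exact ⟨⟨⟨lt_of_le_of_ne h1.1 (Ne.symm b), lt_of_le_of_ne h1.2 d⟩,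
          ⟨lt_of_le_of_ne h2.1 (Ne.symm c), lt_of_le_of_ne h2.2 e⟩⟩, a⟩
    have := Complex.norm_le_of_forall_mem_frontier_norm_le hbd hdc hfr (subset_closure hzmem)
    simp only [norm_div] at this
    rwa [div_le_iff₀ (norm_pos_iff.2 (hne z hz))] at this
  have hlim : Filter.Tendsto (fun δ : ℝ => K * ‖z + δ * (1 + I)‖) (nhdsWithin 0 (Ioi 0))
      (nhds (K * ‖z‖)) := by
    have : Continuous (fun δ : ℝ => K * ‖z + δ * (1 + I)‖) := by fun_prop
    have h2 := this.tendsto 0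
    simp only [ofReal_zero, zero_mul, add_zero] at h2
    exact h2.mono_left nhdsWithin_le_nhds
  refine ge_of_tendsto hlim ?_
  filter_upwards [self_mem_nhdsWithin] with δ hδ using key δ hδ

/-- step 2 -/
lemma LM_lipE (f : ℂ → ℂ) (z0 : ℂ) (R M : ℝ) (Z : Set ℂ) (hZ : IsClosed Z) (hR : 0 < R)
    (hM : 0 ≤ M)
    (hc : ContinuousOn f (Metric.closedBall z0 R))
    (hd : ∀ z ∈ Metric.ball z0 R, z ∉ Z → DifferentiableAt ℂ f z)
    (hH : ∀ z ∈ Metric.ball z0 R, z ∈ Z → ∀ w ∈ Metric.ball z0 R, (w.re = z.re ∨ w.im = z.im) →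
      ‖f w - f z‖ ≤ M * ‖w - z‖) :
    ∃ K : ℝ, 0 ≤ K ∧ ∀ z ∈ Metric.ball z0 (R/4), z ∈ Z → ∀ w ∈ Metric.ball z0 (R/4),
      ‖f w - f z‖ ≤ K * ‖w - z‖ := by
  obtain ⟨C, hC⟩ := (isCompact_closedBall z0 R).exists_bound_of_continuousOn hc
  have hC0 : 0 ≤ C := (norm_nonneg _).trans (hC z0 (Metric.mem_closedBall_self hR.le))
  set ρ := R / 2 with hρ
  have hρ0 : 0 < ρ := by positivity
  set K := 2 * M + 2 * C / ρ with hK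
  have hK0 : 0 ≤ K := by positivity
  refine ⟨K, hK0, ?_⟩
  intro z hz hzZ w hw
  -- the rotated statement
  have main : ∀ u : ℂ, (u = 1 ∨ u = -1 ∨ u = I ∨ u = -I) → ∀ ζ ∈ Icc 0 ρ ×ℂ Icc 0 ρ,
      ‖f (z + u * ζ) - f z‖ ≤ K * ‖ζ‖ := by
    intro u hu
    have hun : ‖u‖ = 1 := by rcases hu with rfl | rfl | rfl | rfl <;> simp
    have hin : ∀ ζ ∈ Icc 0 ρ ×ℂ Icc 0 ρ, z + u * ζ ∈ Metric.ball z0 R := by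
      rintro ζ ⟨h1, h2⟩
      simp only [mem_preimage, mem_Icc] at h1 h2
      have h3 : ‖ζ‖ ≤ 3 / 2 * ρ := by
        rw [Complex.norm_def]
        apply Real.sqrt_le_iff.2 ⟨by positivity, ?_⟩
        rw [normSq_apply]
        nlinarith [h1.1, h1.2, h2.1, h2.2]
      rw [Metric.mem_ball, dist_eq_norm] at hz ⊢
      calc ‖z + u * ζ - z0‖ = ‖(z - z0) + u * ζ‖ := by ring_nf
        _ ≤ ‖z - z0‖ + ‖u * ζ‖ := norm_add_le _ _
        _ = ‖z - z0‖ + ‖ζ‖ := by rw [norm_mul, hun, one_mul]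
        _ < R := by rw [hρ] at h3; linarith
    have hzR : z ∈ Metric.ball z0 R := Metric.ball_subset_ball (by linarith) hz
    have haxis : ∀ a ∈ Metric.ball z0 R, a ∈ Z → ∀ ζ : ℂ, (ζ.re = 0 ∨ ζ.im = 0) →
        a + u * ζ ∈ Metric.ball z0 R → ‖f (a + u * ζ) - f a‖ ≤ M * ‖ζ‖ := by
      intro a ha haZ ζ hζ hm
      have := hH a ha haZ _ hm (by
        rcases hu with rfl | rfl | rfl | rfl <;> rcases hζ with h | h <;> simp [h])
      simpa [hun] using this
    refine LM_quad (fun ζ => f (z + u * ζ) - f z) ρ K ((fun ζ => z + u * ζ) ⁻¹' Z)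
      (hZ.preimage (by fun_prop)) hK0 ?_ ?_ ?_
    · refine ContinuousOn.sub (hc.comp (by fun_prop) ?_) continuousOn_const
      intro ζ hζ
      exact Metric.ball_subset_closedBall (hin ζ hζ)
    · intro ζ hζ hζZ
      have h1 : DifferentiableAt ℂ f (z + u * ζ) :=
        hd _ (hin ζ ⟨Ioo_subset_Icc_self hζ.1, Ioo_subset_Icc_self hζ.2⟩) hζZ
      refine DifferentiableAt.sub_const ?_ _
      exact DifferentiableAt.comp ζ h1 (by fun_prop)
    · intro ζ hζ hcase
      have hζS := hζ
      obtain ⟨h1, h2⟩ := hζ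
      simp only [mem_preimage, mem_Icc] at h1 h2
      have hKM : M ≤ K := by
        have : 0 ≤ 2 * C / ρ := by positivity
        linarith
      have hKM2 : 2 * M ≤ K := by
        have : 0 ≤ 2 * C / ρ := by positivity
        linarith
      have hn := norm_nonneg ζ
      have houter : ρ ≤ ‖ζ‖ → ‖f (z + u * ζ) - f z‖ ≤ K * ‖ζ‖ := by
        intro hle
        have a1 := hC _ (Metric.ball_subset_closedBall (hin ζ hζS))
        have a2 := hC _ (Metric.ball_subset_closedBall hzR)
        calc ‖f (z + u * ζ) - f z‖ ≤ ‖f (z + u * ζ)‖ + ‖f z‖ := norm_sub_le _ _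
          _ ≤ 2 * C := by linarith
          _ = 2 * C / ρ * ρ := by field_simp
          _ ≤ K * ‖ζ‖ := by
            apply mul_le_mul _ hle hρ0.le hK0
            linarith
      rcases hcase with h | h | h | h | h
      · set η : ℂ := ((ζ.re : ℝ) : ℂ) with hη
        have e1 : ζ = η + (ζ.im : ℂ) * I := (Complex.re_add_im ζ).symm
        have hηS : η ∈ Icc 0 ρ ×ℂ Icc 0 ρ := by
          refine ⟨?_, ?_⟩ <;> simp [hη, h1.1, h1.2, hρ0.le]
        have b1 := haxis z hzR hzZ η (Or.inr (by simp [hη])) (hin η hηS)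
        have e2 : z + u * ζ + u * (-(ζ.im : ℂ) * I) = z + u * η := by
          linear_combination u * e1
        have b2 := haxis (z + u * ζ) (hin ζ hζS) h (-(ζ.im : ℂ) * I) (Or.inl (by simp))
          (by rw [e2]; exact hin η hηS)
        rw [e2] at b2
        have c1 : ‖η‖ ≤ ‖ζ‖ := by
          rw [hη, Complex.norm_real]; exact Complex.abs_re_le_norm ζ
        have c2 : ‖-(ζ.im : ℂ) * I‖ ≤ ‖ζ‖ := by
          rw [norm_mul, norm_neg, Complex.norm_real, Complex.norm_I, mul_one]
          exact Complex.abs_im_le_norm ζ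
        have d1 := mul_le_mul_of_nonneg_left c1 hM
        have d2 := mul_le_mul_of_nonneg_left c2 hM
        calc ‖f (z + u * ζ) - f z‖
            = ‖(f (z + u * η) - f z) - (f (z + u * η) - f (z + u * ζ))‖ := by ring_nf
          _ ≤ ‖f (z + u * η) - f z‖ + ‖f (z + u * η) - f (z + u * ζ)‖ := norm_sub_le _ _
          _ ≤ 2 * M * ‖ζ‖ := by linarith
          _ ≤ K * ‖ζ‖ := mul_le_mul_of_nonneg_right hKM2 hn
      · exact (haxis z hzR hzZ ζ (Or.inl h) (hin ζ hζS)).trans (mul_le_mul_of_nonneg_right hKM hn)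
      · exact (haxis z hzR hzZ ζ (Or.inr h) (hin ζ hζS)).trans (mul_le_mul_of_nonneg_right hKM hn)
      · apply houter
        rw [← h]; exact Complex.re_le_norm ζ
      · apply houter
        rw [← h]; exact Complex.im_le_norm ζ
  have hwz : ‖w - z‖ ≤ ρ := by
    rw [Metric.mem_ball, dist_eq_norm] at hz hw
    calc ‖w - z‖ = ‖(w - z0) - (z - z0)‖ := by ring_nf
      _ ≤ ‖w - z0‖ + ‖z - z0‖ := norm_sub_le _ _
      _ ≤ ρ := by rw [hρ]; linarith
  have hre := abs_le.1 ((Complex.abs_re_le_norm (w - z)).trans hwz)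
  have him := abs_le.1 ((Complex.abs_im_le_norm (w - z)).trans hwz)
  have fin : ∀ u : ℂ, (u = 1 ∨ u = -1 ∨ u = I ∨ u = -I) → ∀ v : ℂ, u * v = 1 →
      v * (w - z) ∈ Icc 0 ρ ×ℂ Icc 0 ρ → ‖f w - f z‖ ≤ K * ‖w - z‖ := by
    intro u hu v huv hm
    have := main u hu _ hm
    rw [← mul_assoc, huv, one_mul, add_sub_cancel] at this
    have hun : ‖u‖ = 1 := by rcases hu with rfl | rfl | rfl | rfl <;> simp
    have hvn : ‖v‖ = 1 := by
      have := congrArg norm huv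
      rw [norm_mul, hun] at this; simpa using this
    rwa [norm_mul, hvn, one_mul] at this
  rcases le_total 0 (w - z).re with h1 | h1 <;> rcases le_total 0 (w - z).im with h2 | h2
  · refine fin 1 (by simp) 1 (by simp) ?_
    rw [one_mul]
    exact ⟨⟨h1, hre.2⟩, ⟨h2, him.2⟩⟩
  · refine fin (-I) (by simp) I (by simp) ?_
    refine ⟨?_, ?_⟩ <;> simp only [mem_preimage, I_mul_re, I_mul_im, mem_Icc] <;> constructor <;> linarith
  · refine fin I (by simp) (-I) (by simp) ?_
    refine ⟨?_, ?_⟩ <;> simp only [mem_preimage, neg_mul, neg_re, neg_im, I_mul_re, I_mul_im, mem_Icc] <;> constructor <;> linarith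
  · refine fin (-1) (by simp) (-1) (by simp) ?_
    refine ⟨?_, ?_⟩ <;> simp only [mem_preimage, neg_mul, neg_re, neg_im, one_mul, mem_Icc] <;> constructor <;> linarith

/-- step 3 -/
lemma LM_lip (f : ℂ → ℂ) (z0 : ℂ) (r K : ℝ) (Z : Set ℂ) (hZ : IsClosed Z) (hr : 0 < r)
    (hK : 0 ≤ K) (hz0 : z0 ∈ Z)
    (hc : ContinuousOn f (Metric.ball z0 r))
    (hd : ∀ z ∈ Metric.ball z0 r, z ∉ Z → DifferentiableAt ℂ f z)
    (hL : ∀ z ∈ Metric.ball z0 r, z ∈ Z → ∀ w ∈ Metric.ball z0 r, ‖f w - f z‖ ≤ K * ‖w - z‖) :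
    ∀ z ∈ Metric.ball z0 (r/4), ∀ w ∈ Metric.ball z0 (r/4), ‖f w - f z‖ ≤ 2 * K * ‖w - z‖ := by
  have hsub : Metric.ball z0 (r/4) ⊆ Metric.ball z0 r := Metric.ball_subset_ball (by linarith)
  have hder : ∀ w ∈ Metric.ball z0 (r/4), w ∉ Z → ‖deriv f w‖ ≤ 2 * K := by
    intro w hw hwZ
    obtain ⟨p, hp, hpd⟩ := hZ.exists_infDist_eq_dist ⟨z0, hz0⟩ w
    set d := Metric.infDist w Z with hdd
    have hd0 : 0 < d := by
      rw [hpd]; apply dist_pos.2; rintro rfl; exact hwZ hp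
    have hdr : d < r / 4 := (Metric.infDist_le_dist_of_mem hz0).trans_lt hw
    have hcb : Metric.closedBall w d ⊆ Metric.ball z0 r := by
      intro x hx
      rw [Metric.mem_closedBall] at hx
      rw [Metric.mem_ball] at hw ⊢
      linarith [dist_triangle x w z0]
    have hpb : p ∈ Metric.ball z0 r := hcb (by rw [Metric.mem_closedBall, dist_comm, hpd])
    have hdc : DiffContOnCl ℂ (fun x => f x - f p) (Metric.ball w d) := by
      constructor
      · intro x hx
        refine ((hd x (hcb (Metric.ball_subset_closedBall hx)) ?_).sub_const _).differentiableWithinAt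
        intro hxZ
        have := Metric.infDist_le_dist_of_mem (x := w) hxZ
        rw [Metric.mem_ball, dist_comm] at hx
        linarith
      · rw [closure_ball _ hd0.ne']
        exact (hc.mono hcb).sub continuousOn_const
    have := Complex.norm_deriv_le_of_forall_mem_sphere_norm_le hd0 hdc (C := 2 * K * d) (by
      intro x hx
      have h1 := hL p hpb hp x (hcb (Metric.sphere_subset_closedBall hx))
      have h2 : ‖x - p‖ ≤ 2 * d := by
        rw [← dist_eq_norm]
        rw [Metric.mem_sphere] at hx
        linarith [dist_triangle x w p]
      nlinarith [mul_le_mul_of_nonneg_left h2 hK])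
    rwa [deriv_sub_const, mul_div_cancel_right₀ _ hd0.ne'] at this
  intro z hz w hw
  have hseg : segment ℝ z w ⊆ Metric.ball z0 (r/4) := (convex_ball z0 (r/4)).segment_subset hz hw
  by_cases hcase : ∃ p ∈ segment ℝ z w, p ∈ Z
  · obtain ⟨p, hp, hpZ⟩ := hcase
    have hpb := hsub (hseg hp)
    have h1 := hL p hpb hpZ z (hsub hz)
    have h2 := hL p hpb hpZ w (hsub hw)
    have h3 : dist z p + dist p w = dist z w := dist_add_dist_of_mem_segment hp
    rw [dist_comm z w, dist_comm p w, dist_eq_norm, dist_eq_norm, dist_eq_norm] at h3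
    have h4 : ‖f w - f z‖ ≤ ‖f w - f p‖ + ‖f z - f p‖ := by
      rw [show f w - f z = (f w - f p) - (f z - f p) by ring]; exact norm_sub_le _ _
    have h5 := norm_nonneg (w - z)
    nlinarith [mul_nonneg hK h5]
  · push Not at hcase
    exact Convex.norm_image_sub_le_of_norm_deriv_le
      (fun x hx => hd x (hsub (hseg hx)) (hcase x hx))
      (fun x hx => hder x (hseg hx) (hcase x hx)) (convex_segment z w)
      (left_mem_segment ℝ z w) (right_mem_segment ℝ z w)

/-- step 4 -/
lemma LM_green (g : ℂ → ℂ) (C : NNReal) (hg : LipschitzWith C g) (c : ℂ) (r : ℝ)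
    (hCR : ∀ z ∈ Metric.ball c r, ∃ d : ℂ, HasDerivAt (fun t : ℝ => g (z + t)) d 0 ∧
      HasDerivAt (fun t : ℝ => g (z + t * I)) (I * d) 0) :
    DifferentiableOn ℂ g (Metric.ball c r) := by
  have hgc : Continuous g := hg.continuous
  refine (isConservativeOn_and_continuousOn_iff_isDifferentiableOn Metric.isOpen_ball).1
    ⟨?_, hgc.continuousOn⟩
  intro z w hzw
  rw [← add_eq_zero_iff_eq_neg, wedgeIntegral_add_wedgeIntegral_eq]
  set gx : ℝ → ℝ → ℂ := fun y x => deriv (fun s : ℝ => g (s + y * I)) x with hgx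
  set gy : ℝ → ℝ → ℂ := fun x y => deriv (fun s : ℝ => g (x + s * I)) y with hgy
  have hmem : ∀ x ∈ uIcc z.re w.re, ∀ y ∈ uIcc z.im w.im, (x + y * I : ℂ) ∈ Metric.ball c r := by
    intro x hx y hy
    apply hzw
    refine ⟨?_, ?_⟩ <;> simpa
  have hder : ∀ x y : ℝ, (x + y * I : ℂ) ∈ Metric.ball c r →
      HasDerivAt (fun s : ℝ => g (s + y * I)) (gx y x) x ∧
      HasDerivAt (fun s : ℝ => g (x + s * I)) (gy x y) y ∧ gy x y = I * gx y x := by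
    intro x y hxy
    obtain ⟨d, h1, h2⟩ := hCR _ hxy
    have a1 : HasDerivAt (fun s : ℝ => g (s + y * I)) d x := by
      have := HasDerivAt.comp_sub_const x x (f := fun t : ℝ => g (x + y * I + t)) (f' := d)
        (by simpa using h1)
      refine this.congr_of_eventuallyEq (Filter.Eventually.of_forall fun s => ?_)
      simp only
      congr 1
      push_cast; ring
    have a2 : HasDerivAt (fun s : ℝ => g (x + s * I)) (I * d) y := by
      have := HasDerivAt.comp_sub_const y y (f := fun t : ℝ => g (x + y * I + t * I)) (f' := I * d)
        (by simpa using h2)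
      refine this.congr_of_eventuallyEq (Filter.Eventually.of_forall fun s => ?_)
      simp only
      congr 1
      push_cast; ring
    have b1 : gx y x = d := a1.deriv
    have b2 : gy x y = I * d := a2.deriv
    rw [b1, b2]
    exact ⟨a1, a2, rfl⟩
  have hmx : Measurable (fun p : ℝ × ℝ => gx p.1 p.2) :=
    measurable_deriv_with_param (f := fun (y : ℝ) (s : ℝ) => g (s + y * I))
      (by simp only [Function.uncurry_def]; fun_prop)
  have hmy : Measurable (fun p : ℝ × ℝ => gy p.1 p.2) :=
    measurable_deriv_with_param (f := fun (x : ℝ) (s : ℝ) => g (x + s * I))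
      (by simp only [Function.uncurry_def]; fun_prop)
  have hbx : ∀ y x, ‖gx y x‖ ≤ C := by
    intro y x
    refine norm_deriv_le_of_lipschitz (LipschitzWith.of_dist_le_mul fun a b => ?_)
    refine (hg.dist_le_mul _ _).trans (le_of_eq ?_)
    simp [dist_eq_norm, ← ofReal_sub]
  have hby : ∀ x y, ‖gy x y‖ ≤ C := by
    intro y x
    refine norm_deriv_le_of_lipschitz (LipschitzWith.of_dist_le_mul fun a b => ?_)
    refine (hg.dist_le_mul _ _).trans (le_of_eq ?_)
    simp [dist_eq_norm, ← ofReal_sub, ← sub_mul]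
  have hix : ∀ y a b, IntervalIntegrable (gx y) MeasureTheory.volume a b := by
    intro y a b
    refine (intervalIntegrable_const (c := (C : ℝ))).mono_fun
      (hmx.comp measurable_prodMk_left).aestronglyMeasurable ?_
    refine Filter.Eventually.of_forall fun x => ?_
    simpa using hbx y x
  have hiy : ∀ x a b, IntervalIntegrable (gy x) MeasureTheory.volume a b := by
    intro y a b
    refine (intervalIntegrable_const (c := (C : ℝ))).mono_fun
      (hmy.comp measurable_prodMk_left).aestronglyMeasurable ?_
    refine Filter.Eventually.of_forall fun x => ?_
    simpa using hby y x
  have ftcx : ∀ y ∈ uIcc z.im w.im, ∫ x in z.re..w.re, gx y x = g (w.re + y * I) - g (z.re + y * I) := by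
    intro y hy
    exact intervalIntegral.integral_eq_sub_of_hasDerivAt
      (fun x hx => (hder x y (hmem x hx y hy)).1) (hix y _ _)
  have ftcy : ∀ x ∈ uIcc z.re w.re, ∫ y in z.im..w.im, gy x y = g (x + w.im * I) - g (x + z.im * I) := by
    intro x hx
    exact intervalIntegral.integral_eq_sub_of_hasDerivAt
      (fun y hy => (hder x y (hmem x hx y hy)).2.1) (hiy x _ _)
  have hii : ∀ h : ℝ → ℂ, Continuous h → ∀ a b, IntervalIntegrable h MeasureTheory.volume a b :=
    fun h hh a b => hh.intervalIntegrable a b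
  rw [← intervalIntegral.integral_sub (hii _ (by fun_prop) _ _) (hii _ (by fun_prop) _ _),
    add_sub_assoc, ← smul_sub,
    ← intervalIntegral.integral_sub (hii _ (by fun_prop) _ _) (hii _ (by fun_prop) _ _)]
  have e1 : ∫ x in z.re..w.re, (g (x + z.im * I) - g (x + w.im * I)) =
      - ∫ x in z.re..w.re, ∫ y in z.im..w.im, gy x y := by
    rw [← intervalIntegral.integral_neg]
    refine intervalIntegral.integral_congr fun x hx => ?_
    rw [ftcy x hx]; ring
  have e2 : ∫ y in z.im..w.im, (g (w.re + y * I) - g (z.re + y * I)) =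
      ∫ y in z.im..w.im, ∫ x in z.re..w.re, gx y x := by
    refine intervalIntegral.integral_congr fun y hy => ?_
    rw [ftcx y hy]
  have e3 : ∫ x in z.re..w.re, ∫ y in z.im..w.im, gy x y =
      ∫ y in z.im..w.im, ∫ x in z.re..w.re, gy x y := by
    apply MeasureTheory.intervalIntegral_intervalIntegral_swap
    refine MeasureTheory.Measure.integrableOn_of_bounded (M := C) ?_
      hmy.aestronglyMeasurable (Filter.Eventually.of_forall fun p => hby p.1 p.2)
    rw [MeasureTheory.Measure.volume_eq_prod, MeasureTheory.Measure.prod_prod]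
    simp [uIoc, ENNReal.mul_ne_top]
  have e4 : ∫ y in z.im..w.im, ∫ x in z.re..w.re, gy x y =
      I * ∫ y in z.im..w.im, ∫ x in z.re..w.re, gx y x := by
    rw [← intervalIntegral.integral_const_mul]
    refine intervalIntegral.integral_congr fun y hy => ?_
    rw [← intervalIntegral.integral_const_mul]
    refine intervalIntegral.integral_congr fun x hx => ?_
    exact (hder x y (hmem x hx y hy)).2.2
  rw [e1, e2, e3, e4, smul_eq_mul]
  ring

/-- step 1 -/
lemma LM_baire (U : Set ℂ) (hU : IsOpen U) (f : ℂ → ℂ) (hcont : ContinuousOn f U)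
    (hCR : ∀ z ∈ U, ∃ d : ℂ, HasDerivAt (fun t : ℝ => f (z + t)) d 0 ∧
      HasDerivAt (fun t : ℝ => f (z + t * I)) (I * d) 0)
    (Z : Set ℂ) (hZ : IsClosed Z) (hne : (U ∩ Z).Nonempty) :
    ∃ z0 ∈ U ∩ Z, ∃ R > 0, ∃ M : ℝ, 0 ≤ M ∧ Metric.closedBall z0 R ⊆ U ∧
      ∀ z ∈ Metric.ball z0 R, z ∈ Z → ∀ w ∈ Metric.ball z0 R, (w.re = z.re ∨ w.im = z.im) →
      ‖f w - f z‖ ≤ M * ‖w - z‖ := by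
  have hlc : IsLocallyClosed (U ∩ Z) := hU.isLocallyClosed.inter hZ.isLocallyClosed
  have : LocallyCompactSpace (U ∩ Z : Set ℂ) := hlc.locallyCompactSpace
  have : Nonempty (U ∩ Z : Set ℂ) := hne.to_subtype
  let A : ℕ → Set (U ∩ Z : Set ℂ) := fun n => {z | ∀ u : ℂ, u.re = 0 ∨ u.im = 0 →
    ‖u‖ ≤ 1 / ((n : ℝ) + 1) → (z : ℂ) + u ∈ U → ‖f (z + u) - f z‖ ≤ n * ‖u‖}
  have hA : ∀ n, IsClosed (A n) := by
    intro n
    have : A n = ⋂ u : ℂ, ⋂ (_ : u.re = 0 ∨ u.im = 0), ⋂ (_ : ‖u‖ ≤ 1 / ((n : ℝ) + 1)),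
        {z : (U ∩ Z : Set ℂ) | (z : ℂ) + u ∈ U → ‖f (z + u) - f z‖ ≤ n * ‖u‖} := by
      ext z; simp [A]
    rw [this]
    refine isClosed_iInter fun u => isClosed_iInter fun _ => isClosed_iInter fun _ => ?_
    rw [← isOpen_compl_iff, isOpen_iff_mem_nhds]
    intro z hz
    simp only [mem_compl_iff, mem_ofPred_eq, Classical.not_imp, not_le] at hz
    obtain ⟨hzU, hlt⟩ := hz
    have c0 : Continuous (fun z : (U ∩ Z : Set ℂ) => (z : ℂ) + u) := by fun_prop
    have c1 : ContinuousAt (fun z : (U ∩ Z : Set ℂ) => f ((z : ℂ) + u)) z :=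
      ContinuousAt.comp (f := fun z : (U ∩ Z : Set ℂ) => (z : ℂ) + u)
        (hcont.continuousAt (hU.mem_nhds hzU)) c0.continuousAt
    have c2 : ContinuousAt (fun z : (U ∩ Z : Set ℂ) => f (z : ℂ)) z :=
      ContinuousAt.comp (f := fun z : (U ∩ Z : Set ℂ) => (z : ℂ))
        (hcont.continuousAt (hU.mem_nhds z.2.1)) continuous_subtype_val.continuousAt
    have e1 := c0.continuousAt.preimage_mem_nhds (hU.mem_nhds hzU)
    have e2 := (c1.sub c2).norm.eventually_const_lt hlt
    filter_upwards [e1, e2] with y h1 h2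
    simp only [mem_compl_iff, mem_ofPred_eq, Classical.not_imp, not_le]
    exact ⟨h1, h2⟩
  have hcov : ⋃ n, A n = univ := by
    refine eq_univ_of_forall fun z => mem_iUnion.2 ?_
    obtain ⟨d, h1, h2⟩ := hCR z z.2.1
    have b1 := h1.isBigO_sub
    have b2 := h2.isBigO_sub
    obtain ⟨K1, hK1⟩ := b1.bound
    obtain ⟨K2, hK2⟩ := b2.bound
    obtain ⟨δ, hδ, hb⟩ := Metric.eventually_nhds_iff.1 (hK1.and hK2)
    obtain ⟨n1, hn1⟩ := exists_nat_one_div_lt hδ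
    obtain ⟨n2, hn2⟩ := exists_nat_ge (max K1 K2)
    refine ⟨max n1 n2, ?_⟩
    intro u hu hun _
    have hnn : ((max n1 n2 : ℕ) : ℝ) = max (n1 : ℝ) n2 := by push_cast; rfl
    have hlt : ‖u‖ < δ := by
      refine hun.trans_lt (lt_of_le_of_lt ?_ hn1)
      apply one_div_le_one_div_of_le (by positivity)
      rw [hnn]; linarith [le_max_left (n1 : ℝ) n2]
    have hK1' : K1 ≤ ((max n1 n2 : ℕ) : ℝ) := by
      rw [hnn]; exact (le_max_left _ _).trans (hn2.trans (le_max_right _ _))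
    have hK2' : K2 ≤ ((max n1 n2 : ℕ) : ℝ) := by
      rw [hnn]; exact (le_max_right _ _).trans (hn2.trans (le_max_right _ _))
    rcases hu with h | h
    · have e : u = (u.im : ℂ) * I := by apply Complex.ext <;> simp [h]
      have hni : ‖u‖ = |u.im| := by rw [e]; simp
      have := (hb (y := u.im) (by simpa [← hni] using hlt)).2
      simp only [ofReal_zero, zero_mul, add_zero, sub_zero, ← e, Real.norm_eq_abs, ← hni] at this
      exact this.trans (mul_le_mul_of_nonneg_right hK2' (norm_nonneg _))
    · have e : u = (u.re : ℂ) := by apply Complex.ext <;> simp [h]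
      have hni : ‖u‖ = |u.re| := by rw [e]; simp
      have := (hb (y := u.re) (by simpa [← hni] using hlt)).1
      simp only [ofReal_zero, add_zero, sub_zero, ← e, Real.norm_eq_abs, ← hni] at this
      exact this.trans (mul_le_mul_of_nonneg_right hK1' (norm_nonneg _))
  obtain ⟨n, z0, hz0⟩ := nonempty_interior_of_iUnion_of_closed hA hcov
  obtain ⟨ε, hε, hball⟩ := Metric.mem_nhds_iff.1 (mem_interior_iff_mem_nhds.1 hz0)
  obtain ⟨ε', hε', hball'⟩ := Metric.mem_nhds_iff.1 (hU.mem_nhds z0.2.1)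
  have hpos : (0 : ℝ) < 1 / ((n : ℝ) + 1) := by positivity
  refine ⟨z0, z0.2, min ε (min (ε' / 2) (1 / ((n : ℝ) + 1) / 2)), by positivity, n, by positivity, ?_, ?_⟩
  · refine (Metric.closedBall_subset_ball ?_).trans hball'
    refine lt_of_le_of_lt ((min_le_right _ _).trans (min_le_left _ _)) (by linarith)
  · intro z hz hzZ w hw hax
    rw [Metric.mem_ball, lt_min_iff, lt_min_iff] at hz hw
    have hzU : z ∈ U := hball' (by rw [Metric.mem_ball]; linarith [hz.2.1])
    have hwU : w ∈ U := hball' (by rw [Metric.mem_ball]; linarith [hw.2.1])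
    have hzA : (⟨z, hzU, hzZ⟩ : (U ∩ Z : Set ℂ)) ∈ A n := hball (by
      rw [Metric.mem_ball, Subtype.dist_eq]; exact hz.1)
    have := hzA (w - z) (by
      rcases hax with h | h
      · left; simp [h]
      · right; simp [h]) (by
      rw [← dist_eq_norm]
      linarith [dist_triangle_right w z z0, hz.2.2, hw.2.2]) (by simpa using hwU)
    simpa using this

lemma LM_main (U : Set ℂ) (hU : IsOpen U) (f : ℂ → ℂ) (hcont : ContinuousOn f U)
    (hCR : ∀ z ∈ U, ∃ d : ℂ, HasDerivAt (fun t : ℝ => f (z + t)) d 0 ∧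
      HasDerivAt (fun t : ℝ => f (z + t * I)) (I * d) 0) :
    DifferentiableOn ℂ f U := by
  by_contra hcon
  set Z : Set ℂ := {z | AnalyticAt ℂ f z}ᶜ with hZdef
  have hZ : IsClosed Z := (isOpen_analyticAt ℂ f).isClosed_compl
  have hne : (U ∩ Z).Nonempty := by
    by_contra hemp
    apply hcon
    intro z hz
    have : AnalyticAt ℂ f z := by
      by_contra h
      exact hemp ⟨z, hz, h⟩
    exact this.differentiableAt.differentiableWithinAt
  obtain ⟨z0, ⟨hz0U, hz0Z⟩, R, hR, M, hM, hRU, hH⟩ := LM_baire U hU f hcont hCR Z hZ hne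
  have hd : ∀ z, z ∉ Z → DifferentiableAt ℂ f z := fun z hz => by
    have : AnalyticAt ℂ f z := not_not.1 hz
    exact this.differentiableAt
  obtain ⟨K, hK, hL⟩ := LM_lipE f z0 R M Z hZ hR hM (hcont.mono hRU) (fun z _ h => hd z h) hH
  have hs1 : Metric.ball z0 (R / 4) ⊆ U :=
    (Metric.ball_subset_ball (by linarith)).trans (Metric.ball_subset_closedBall.trans hRU)
  have hs2 : Metric.ball z0 (R / 4 / 4) ⊆ U :=
    (Metric.ball_subset_ball (by linarith)).trans hs1
  have hLip := LM_lip f z0 (R / 4) K Z hZ (by positivity) hK hz0Z (hcont.mono hs1)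
    (fun z _ h => hd z h) hL
  have hLO : LipschitzOnWith (Real.toNNReal (2 * K)) f (Metric.ball z0 (R / 4 / 4)) := by
    refine LipschitzOnWith.of_dist_le_mul fun x hx y hy => ?_
    rw [Real.coe_toNNReal _ (by positivity), dist_eq_norm, dist_eq_norm]
    exact hLip y hy x hx
  obtain ⟨g, hg, hfg⟩ := hLO.extend_finite_dimension
  have hgd := LM_green g _ hg z0 (R / 4 / 4) (by
    intro z hz
    obtain ⟨d, h1, h2⟩ := hCR z (hs2 hz)
    refine ⟨d, h1.congr_of_eventuallyEq ?_, h2.congr_of_eventuallyEq ?_⟩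
    · have hc : Continuous (fun t : ℝ => z + (t : ℂ)) := by fun_prop
      have := hc.continuousAt.preimage_mem_nhds (x := 0)
        (Metric.isOpen_ball.mem_nhds (by simpa using hz))
      filter_upwards [this] with t ht using (hfg ht).symm
    · have hc : Continuous (fun t : ℝ => z + (t : ℂ) * I) := by fun_prop
      have := hc.continuousAt.preimage_mem_nhds (x := 0)
        (Metric.isOpen_ball.mem_nhds (by simpa using hz))
      filter_upwards [this] with t ht using (hfg ht).symm)
  have hfd : DifferentiableOn ℂ f (Metric.ball z0 (R / 4 / 4)) := hgd.congr hfg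
  exact hz0Z (hfd.analyticAt (Metric.ball_mem_nhds z0 (by positivity)))

/-- **The Looman–Menchoff theorem** (proved by Montel): if `f = P + iQ` is
continuous on an open set `U ⊆ ℂ` and the four partial derivatives
`∂P/∂x, ∂P/∂y, ∂Q/∂x, ∂Q/∂y` exist at every point of `U` and satisfy the
Cauchy–Riemann equations `∂P/∂x = ∂Q/∂y` and `∂P/∂y = -∂Q/∂x` there, then `f`
is holomorphic on `U`.

The partial derivative in the `x`-direction (resp. `y`-direction) at `z` is
the derivative at `t = 0` of `t ↦ (f (z + t))` (resp. `t ↦ (f (z + t * I))`)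
for real `t`. -/
theorem looman_menchoff (U : Set ℂ) (hU : IsOpen U) (f : ℂ → ℂ)
    (hcont : ContinuousOn f U)
    (hCR : ∀ z ∈ U, ∃ px py qx qy : ℝ,
      HasDerivAt (fun t : ℝ => (f (z + (t : ℂ))).re) px 0 ∧
      HasDerivAt (fun t : ℝ => (f (z + (t : ℂ) * Complex.I)).re) py 0 ∧
      HasDerivAt (fun t : ℝ => (f (z + (t : ℂ))).im) qx 0 ∧
      HasDerivAt (fun t : ℝ => (f (z + (t : ℂ) * Complex.I)).im) qy 0 ∧
      px = qy ∧ py = -qx) :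
    DifferentiableOn ℂ f U := by
  refine LM_main U hU f hcont fun z hz => ?_
  obtain ⟨px, py, qx, qy, h1, h2, h3, h4, e1, e2⟩ := hCR z hz
  refine ⟨px + qx * I, ?_, ?_⟩
  · have := h1.ofReal_comp.add (h3.ofReal_comp.mul_const I)
    refine this.congr_of_eventuallyEq (Filter.Eventually.of_forall fun t => ?_)
    exact (Complex.re_add_im _).symm
  · have := h2.ofReal_comp.add (h4.ofReal_comp.mul_const I)
    have e : I * (px + qx * I) = py + qy * I := by
      rw [e2, ← e1]; push_cast
      linear_combination (qx : ℂ) * I_mul_I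
    rw [e]
    refine this.congr_of_eventuallyEq (Filter.Eventually.of_forall fun t => ?_)
    exact (Complex.re_add_im _).symm
end
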